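/- Let ω = e^{2πi/3} and define complex Hermitian 2×2 matrices X_1 = diag(1,−1), X_2 = [[0,1],[1,0]], X_3 = [[0, ω],[conj(ω), 0]], X_4 = [[0, conj(ω)],[ω, 0]], and Y_1 = diag(−2/√13, 2/√13), Y_2 = (−3/(2√13))·[[0,1],[1,0]], Y_3 = (−3/(2√13))·[[0, ω],[conj(ω), 0]], Y_4 = (−3/(2√13))·[[0, conj(ω)],[ω, 0]]. Then: (i) −I_2 ≼ X_i ≼ I_2 for each i, so (X_1,X_2,X_3,X_4) lies in level 2 of the matrix cube in four variables; (ii) Σ_{i=1}^4 ε_i Y_i ≼ I_2 for every sign vector ε ∈ {±1}^4, so (Y_1,Y_2,Y_3,Y_4) lies in level 2 of the matrix diamond in four variables; and (iii) λ_max(Σ_{i=1}^4 X_i ⊗ Y_i) = √13/2. Consequently, the maximum of λ_max(Σ_{i=1}^4 X_i ⊗ Y_i) over all tuples X in level 2 of the matrix cube and Y in level 2 of the matrix diamond is at least √13/2. -/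

import Mathlib

open Matrix
open scoped Kronecker ComplexOrder

/-- The largest eigenvalue of a (Hermitian) complex matrix, as the supremum of its
real eigenvalues. -/
noncomputable def lambdaMaxC {m : Type*} [Fintype m] (M : Matrix m m ℂ) : ℝ :=
  sSup {t : ℝ | ∃ v : m → ℂ, v ≠ 0 ∧ M.mulVec v = (t : ℂ) • v}

/-- `ω = e^{2πi/3}`. -/
noncomputable def ω : ℂ := Complex.exp (2 * Real.pi * Complex.I / 3)

/-- Membership in level 2 of the matrix cube in four variables. -/
def inCube2 (X : Fin 4 → Matrix (Fin 2) (Fin 2) ℂ) : Prop :=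
  ∀ i, (X i).IsHermitian ∧ ((1 : Matrix (Fin 2) (Fin 2) ℂ) - X i).PosSemidef ∧
    ((1 : Matrix (Fin 2) (Fin 2) ℂ) + X i).PosSemidef

/-- Membership in level 2 of the matrix diamond in four variables. -/
def inDiamond2 (Y : Fin 4 → Matrix (Fin 2) (Fin 2) ℂ) : Prop :=
  (∀ i, (Y i).IsHermitian) ∧
    ∀ ε : Fin 4 → ℝ, (∀ i, ε i = 1 ∨ ε i = -1) →
      ((1 : Matrix (Fin 2) (Fin 2) ℂ) - ∑ i, ε i • Y i).PosSemidef

/-- `X_1 = diag(1,−1)`, `X_2 = [[0,1],[1,0]]`, `X_3 = [[0,ω],[ω̄,0]]`, `X_4 = [[0,ω̄],[ω,0]]`. -/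
noncomputable def X5 : Fin 4 → Matrix (Fin 2) (Fin 2) ℂ
  | 0 => !![1, 0; 0, -1]
  | 1 => !![0, 1; 1, 0]
  | 2 => !![0, ω; starRingEnd ℂ ω, 0]
  | 3 => !![0, starRingEnd ℂ ω; ω, 0]

/-- `Y_1 = diag(−2/√13, 2/√13)`, `Y_2 = (−3/(2√13))·[[0,1],[1,0]]`, etc. -/
noncomputable def Y5 : Fin 4 → Matrix (Fin 2) (Fin 2) ℂ
  | 0 => !![((-2 / Real.sqrt 13 : ℝ) : ℂ), 0; 0, ((2 / Real.sqrt 13 : ℝ) : ℂ)]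
  | 1 => (-3 / (2 * Real.sqrt 13) : ℝ) • !![0, 1; 1, 0]
  | 2 => (-3 / (2 * Real.sqrt 13) : ℝ) • !![0, ω; starRingEnd ℂ ω, 0]
  | 3 => (-3 / (2 * Real.sqrt 13) : ℝ) • !![0, starRingEnd ℂ ω; ω, 0]

/-!
The matrices `X5 i` and all signed sums of the `Y5 i` are traceless Hermitian `2 × 2` matrices
`[[a, b], [b̄, -a]]`, which square to `a² + |b|²`; such a matrix is `≼ I` as soon as
`a² + |b|² ≤ 1`. As `Y5 i = -(w i / (2√13)) X5 i` with weights `w = (4, 3, 3, 3)`, the diamond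
condition becomes `16 + 9 |ε₁ + ε₂ω + ε₃ω̄|² ≤ 52`, and
`|x + yω + zω̄|² = x² + y² + z² - xy - yz - zx` is at most `4` on signs.
For the eigenvalue, `1 + ω² + ω̄² = 0` turns `13 + ∑ i, w i (X5 i ⊗ X5 i)` into a sum of squares of
`e₀₀`, `e₁₁` and `e₀₁ + e₁₀`, all of which are orthogonal to `e₀₁ - e₁₀`.
The supremum is finite because
`2 (1 - A ⊗ B) = (1 - A) ⊗ (1 + B) + (1 + A) ⊗ (1 - B)`.
-/

section PosSemidef

lemma posSemidef_of_add_self {𝕜 n : Type*} [RCLike 𝕜] {A : Matrix n n 𝕜}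
    (h : (A + A).PosSemidef) : A.PosSemidef := by
  have hhalf : ((1 / 2 : ℝ) • (A + A)).PosSemidef := h.smul (by norm_num)
  rwa [← two_smul ℝ A, smul_smul, one_div, inv_mul_cancel₀ two_ne_zero, one_smul] at hhalf

variable {𝕜 m n ι : Type*} [RCLike 𝕜] [DecidableEq m] [DecidableEq n] [Fintype ι]

lemma posSemidef_one_sub_of_mul_self [Fintype n] {A : Matrix n n 𝕜} (hA : A.IsHermitian)
    (h : (1 - A * A).PosSemidef) : (1 - A).PosSemidef := by
  have hsq : ((1 - A) * (1 - A)).PosSemidef := by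
    have := posSemidef_conjTranspose_mul_self (1 - A)
    rwa [(isHermitian_one.sub hA).eq] at this
  have hsplit : (1 - A) + (1 - A) = (1 - A) * (1 - A) + (1 - A * A) := by noncomm_ring
  exact posSemidef_of_add_self (hsplit ▸ hsq.add h)

lemma posSemidef_one_sub_kronecker [Finite m] [Finite n] {A : Matrix m m 𝕜} {B : Matrix n n 𝕜}
    (hA : (1 - A).PosSemidef) (hA' : (1 + A).PosSemidef)
    (hB : (1 - B).PosSemidef) (hB' : (1 + B).PosSemidef) : (1 - A ⊗ₖ B).PosSemidef := by
  have hsplit : (1 - A ⊗ₖ B) + (1 - A ⊗ₖ B) = (1 - A) ⊗ₖ (1 + B) + (1 + A) ⊗ₖ (1 - B) := by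
    rw [← one_kronecker_one]
    ext ⟨i, j⟩ ⟨k, l⟩
    simp only [Matrix.add_apply, Matrix.sub_apply, kroneckerMap_apply]
    ring
  exact posSemidef_of_add_self (hsplit ▸ (hA.kronecker hB').add (hA'.kronecker hB))

lemma posSemidef_card_smul_one_sub_sum_kronecker [Finite m] [Finite n]
    {X : ι → Matrix m m 𝕜} {Y : ι → Matrix n n 𝕜}
    (hX : ∀ i, (1 - X i).PosSemidef) (hX' : ∀ i, (1 + X i).PosSemidef)
    (hY : ∀ i, (1 - Y i).PosSemidef) (hY' : ∀ i, (1 + Y i).PosSemidef) :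
    ((Fintype.card ι : ℝ) • 1 - ∑ i, X i ⊗ₖ Y i).PosSemidef := by
  have hsum : (Fintype.card ι : ℝ) • 1 - ∑ i, X i ⊗ₖ Y i = ∑ i, (1 - X i ⊗ₖ Y i) := by
    simp [Finset.sum_sub_distrib, Nat.cast_smul_eq_nsmul]
  rw [hsum]
  exact posSemidef_sum _ fun i _ ↦
    posSemidef_one_sub_kronecker (hX i) (hX' i) (hY i) (hY' i)

-- Average over the two sign vectors that agree at `i` and are opposite everywhere else.
lemma posSemidef_one_sub_smul_of_forall_sign {Y : ι → Matrix n n 𝕜}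
    (hY : ∀ ε : ι → ℝ, (∀ i, ε i = 1 ∨ ε i = -1) → (1 - ∑ i, ε i • Y i).PosSemidef)
    (i : ι) {s : ℝ} (hs : s = 1 ∨ s = -1) : (1 - s • Y i).PosSemidef := by
  classical
  let ε : ι → ℝ := fun _ ↦ s
  let ε' : ι → ℝ := Function.update (fun _ ↦ -s) i s
  have hε' : ∀ j, ε' j = 1 ∨ ε' j = -1 := fun j ↦ by
    rcases eq_or_ne j i with rfl | hj
    · simpa [ε'] using hs
    · simpa [ε', hj, neg_eq_iff_eq_neg] using hs.symm
  have hsum : ∑ j, ε j • Y j + ∑ j, ε' j • Y j = (2 : ℝ) • s • Y i := by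
    rw [← Finset.sum_add_distrib, Finset.sum_eq_single i]
    · simp [ε, ε', two_smul]
    · intro j _ hj
      simp [ε, ε', hj]
    · simp
  have hsplit : (1 - s • Y i) + (1 - s • Y i) =
      (1 - ∑ j, ε j • Y j) + (1 - ∑ j, ε' j • Y j) := by
    rw [sub_add_sub_comm, sub_add_sub_comm, hsum, two_smul]
  exact posSemidef_of_add_self (hsplit ▸ (hY ε fun _ ↦ hs).add (hY ε' hε'))

end PosSemidef

section LambdaMax

variable {m : Type*} [Fintype m] [DecidableEq m] {M : Matrix m m ℂ} {c : ℝ}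

lemma eigenvalue_le_of_posSemidef_smul_one_sub (hM : (c • 1 - M).PosSemidef) {t : ℝ} {v : m → ℂ}
    (hv : v ≠ 0) (htv : M *ᵥ v = (t : ℂ) • v) : t ≤ c := by
  have hnonneg : 0 ≤ ((c - t : ℝ) : ℂ) * (star v ⬝ᵥ v) := by
    have := hM.dotProduct_mulVec_nonneg v
    rwa [sub_mulVec, smul_mulVec, one_mulVec, htv, ← Complex.coe_smul, ← sub_smul,
      dotProduct_smul, smul_eq_mul, ← Complex.ofReal_sub] at this
  have hre : 0 ≤ (c - t) * (star v ⬝ᵥ v).re := by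
    simpa only [Complex.zero_re, Complex.re_ofReal_mul] using (Complex.le_def.1 hnonneg).1
  have hpos : 0 < (star v ⬝ᵥ v).re := (Complex.lt_def.1 (dotProduct_star_self_pos_iff.2 hv)).1
  exact sub_nonneg.1 (nonneg_of_mul_nonneg_left hre hpos)

lemma lambdaMaxC_le (hc : 0 ≤ c) (hM : (c • 1 - M).PosSemidef) : lambdaMaxC M ≤ c :=
  Real.sSup_le (fun _ ⟨_, hv, htv⟩ ↦ eigenvalue_le_of_posSemidef_smul_one_sub hM hv htv) hc

lemma lambdaMaxC_eq (hM : (c • 1 - M).PosSemidef) {v : m → ℂ} (hv : v ≠ 0)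
    (hMv : (c • 1 - M) *ᵥ v = 0) : lambdaMaxC M = c := by
  refine IsGreatest.csSup_eq ⟨⟨v, hv, ?_⟩, fun _ ⟨_, hw, htw⟩ ↦
    eigenvalue_le_of_posSemidef_smul_one_sub hM hw htw⟩
  rw [sub_mulVec, smul_mulVec, one_mulVec, sub_eq_zero] at hMv
  rw [← hMv, Complex.coe_smul]

end LambdaMax

lemma lambdaMaxC_sum_kronecker_le {X Y : Fin 4 → Matrix (Fin 2) (Fin 2) ℂ} (hX : inCube2 X)
    (hY : inDiamond2 Y) : lambdaMaxC (∑ i, X i ⊗ₖ Y i) ≤ 4 := by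
  have hYneg (i : Fin 4) : (1 - Y i).PosSemidef := by
    simpa using posSemidef_one_sub_smul_of_forall_sign hY.2 i (Or.inl rfl)
  have hYpos (i : Fin 4) : (1 + Y i).PosSemidef := by
    simpa using posSemidef_one_sub_smul_of_forall_sign hY.2 i (Or.inr rfl)
  refine lambdaMaxC_le (by norm_num) ?_
  simpa using posSemidef_card_smul_one_sub_sum_kronecker
    (fun i ↦ (hX i).2.1) (fun i ↦ (hX i).2.2) hYneg hYpos

section TracelessHermitian

/-- The traceless Hermitian `2 × 2` matrix with diagonal entries `±a` and upper right entry `b`, as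
a real-linear function of the pair `(a, b)`. -/
def tracelessHermitian : ℝ × ℂ →ₗ[ℝ] Matrix (Fin 2) (Fin 2) ℂ where
  toFun p := !![(p.1 : ℂ), p.2; starRingEnd ℂ p.2, -(p.1 : ℂ)]
  map_add' p q := by simp [add_comm]
  map_smul' r p := by simp

lemma tracelessHermitian_apply (a : ℝ) (b : ℂ) :
    tracelessHermitian (a, b) = !![(a : ℂ), b; starRingEnd ℂ b, -(a : ℂ)] := rfl

lemma isHermitian_tracelessHermitian (p : ℝ × ℂ) : (tracelessHermitian p).IsHermitian := by
  ext i j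
  fin_cases i <;> fin_cases j <;> simp [tracelessHermitian]

lemma tracelessHermitian_mul_self (p : ℝ × ℂ) :
    tracelessHermitian p * tracelessHermitian p = (p.1 ^ 2 + ‖p.2‖ ^ 2) • 1 := by
  ext i j
  fin_cases i <;> fin_cases j <;>
    simp [tracelessHermitian, Complex.mul_conj', Complex.conj_mul'] <;> ring

lemma posSemidef_one_sub_tracelessHermitian {p : ℝ × ℂ} (hp : p.1 ^ 2 + ‖p.2‖ ^ 2 ≤ 1) :
    (1 - tracelessHermitian p).PosSemidef := by
  refine posSemidef_one_sub_of_mul_self (isHermitian_tracelessHermitian p) ?_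
  have : (1 : Matrix (Fin 2) (Fin 2) ℂ) - tracelessHermitian p * tracelessHermitian p =
      (1 - (p.1 ^ 2 + ‖p.2‖ ^ 2)) • 1 := by
    rw [tracelessHermitian_mul_self, sub_smul, one_smul]
  rw [this]
  exact PosSemidef.one.smul (sub_nonneg.2 hp)

end TracelessHermitian

section Omega

lemma isPrimitiveRoot_ω : IsPrimitiveRoot ω 3 := by
  simpa [ω] using Complex.isPrimitiveRoot_exp 3 (by norm_num)

lemma norm_ω : ‖ω‖ = 1 := isPrimitiveRoot_ω.norm'_eq_one (by norm_num)

lemma ω_mul_conj_ω : ω * starRingEnd ℂ ω = 1 := by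
  simp [Complex.mul_conj', norm_ω]

lemma conj_ω_eq_sq : starRingEnd ℂ ω = ω ^ 2 := by
  refine mul_left_cancel₀ (isPrimitiveRoot_ω.ne_zero (by norm_num)) ?_
  rw [ω_mul_conj_ω, ← pow_succ', isPrimitiveRoot_ω.pow_eq_one]

lemma one_add_ω_add_conj_ω : 1 + ω + starRingEnd ℂ ω = 0 := by
  simpa [Finset.sum_range_succ, conj_ω_eq_sq] using
    isPrimitiveRoot_ω.geom_sum_eq_zero (by norm_num)

lemma norm_sq_add_mul_ω_add_mul_conj_ω (x y z : ℝ) :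
    ‖(x + y * ω + z * starRingEnd ℂ ω : ℂ)‖ ^ 2 =
      x ^ 2 + y ^ 2 + z ^ 2 - x * y - y * z - z * x := by
  apply Complex.ofReal_injective
  rw [Complex.ofReal_pow, ← Complex.mul_conj']
  have hω : ω ^ 3 = 1 := isPrimitiveRoot_ω.pow_eq_one
  have hsum := one_add_ω_add_conj_ω
  simp only [map_add, map_mul, Complex.conj_ofReal, Complex.conj_conj]
  rw [conj_ω_eq_sq] at hsum ⊢
  push_cast
  linear_combination (x * y + z * x + y * z : ℂ) * hsum +
    (y ^ 2 + z ^ 2 + y * z * ω : ℂ) * hω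

lemma norm_sq_add_mul_ω_add_mul_conj_ω_le_four {x y z : ℝ} (hx : x = 1 ∨ x = -1)
    (hy : y = 1 ∨ y = -1) (hz : z = 1 ∨ z = -1) :
    ‖(x + y * ω + z * starRingEnd ℂ ω : ℂ)‖ ^ 2 ≤ 4 := by
  rw [norm_sq_add_mul_ω_add_mul_conj_ω]
  rcases hx with rfl | rfl <;> rcases hy with rfl | rfl <;> rcases hz with rfl | rfl <;> norm_num

end Omega

/-- The coordinates of the matrices `X5 i` under `tracelessHermitian`. -/
noncomputable def cubeCoord : Fin 4 → ℝ × ℂ :=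
  ![(1, 0), (0, 1), (0, ω), (0, starRingEnd ℂ ω)]

/-- The integers `w i` for which `Y5 i = -(w i / (2√13)) X5 i`. -/
def diamondWeight : Fin 4 → ℝ := ![4, 3, 3, 3]

lemma X5_eq_tracelessHermitian (i : Fin 4) : X5 i = tracelessHermitian (cubeCoord i) := by
  fin_cases i <;> simp [X5, cubeCoord, tracelessHermitian_apply]

lemma Y5_eq_smul_X5 (i : Fin 4) : Y5 i = (-(2 * √13)⁻¹ * diamondWeight i) • X5 i := by
  fin_cases i
  · ext k l
    fin_cases k <;> fin_cases l <;> simp [X5, Y5, diamondWeight] <;> ring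
  all_goals
    simp only [X5, Y5, diamondWeight]
    congr 1
    simp
    ring

lemma inCube2_X5 : inCube2 X5 := by
  intro i
  have hcoord : (cubeCoord i).1 ^ 2 + ‖(cubeCoord i).2‖ ^ 2 ≤ 1 := by
    fin_cases i <;> simp [cubeCoord, norm_ω]
  rw [X5_eq_tracelessHermitian]
  refine ⟨isHermitian_tracelessHermitian _, posSemidef_one_sub_tracelessHermitian hcoord, ?_⟩
  rw [← sub_neg_eq_add, ← map_neg]
  exact posSemidef_one_sub_tracelessHermitian (by simpa using hcoord)

lemma inv_two_mul_sqrt_thirteen_sq : ((2 * √13)⁻¹) ^ 2 = (1 / 52 : ℝ) := by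
  rw [inv_pow, mul_pow, Real.sq_sqrt (by norm_num)]
  norm_num

lemma sum_smul_cubeCoord (ε : Fin 4 → ℝ) :
    ∑ i, (ε i * diamondWeight i) • cubeCoord i =
      (4 * ε 0, 3 * (ε 1 + ε 2 * ω + ε 3 * starRingEnd ℂ ω)) := by
  ext1 <;> simp [Fin.sum_univ_four, cubeCoord, diamondWeight] <;> ring

lemma sum_smul_Y5 (ε : Fin 4 → ℝ) :
    ∑ i, ε i • Y5 i = tracelessHermitian
      (-(2 * √13)⁻¹ • (4 * ε 0, 3 * (ε 1 + ε 2 * ω + ε 3 * starRingEnd ℂ ω))) := by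
  simp only [← sum_smul_cubeCoord, Y5_eq_smul_X5, X5_eq_tracelessHermitian, map_smul, map_sum,
    Finset.smul_sum, smul_smul]
  congr! 2
  ring

lemma inDiamond2_Y5 : inDiamond2 Y5 := by
  refine ⟨fun i ↦ ?_, fun ε hε ↦ ?_⟩
  · rw [Y5_eq_smul_X5, X5_eq_tracelessHermitian, ← map_smul]
    exact isHermitian_tracelessHermitian _
  · rw [sum_smul_Y5]
    apply posSemidef_one_sub_tracelessHermitian
    set z : ℂ := ε 1 + ε 2 * ω + ε 3 * starRingEnd ℂ ω
    have hz4 : ‖z‖ ^ 2 ≤ 4 := norm_sq_add_mul_ω_add_mul_conj_ω_le_four (hε 1) (hε 2) (hε 3)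
    have hε0 : ε 0 ^ 2 = 1 := by rcases hε 0 with h | h <;> simp [h]
    calc (-(2 * √13)⁻¹ • (4 * ε 0)) ^ 2 + ‖-(2 * √13)⁻¹ • (3 * z)‖ ^ 2
        = (2 * √13)⁻¹ ^ 2 * (16 * ε 0 ^ 2 + 9 * ‖z‖ ^ 2) := by
          rw [norm_smul, norm_mul, norm_neg, mul_pow, mul_pow, smul_eq_mul, Real.norm_eq_abs,
            sq_abs, Complex.norm_ofNat]
          ring
      _ ≤ 1 := by
          rw [inv_two_mul_sqrt_thirteen_sq, hε0]
          linarith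

/-- The unnormalised singlet vector `e₀₁ - e₁₀`, which spans the top eigenspace of
`∑ i, X5 i ⊗ₖ Y5 i`. -/
def singlet : Fin 2 × Fin 2 → ℂ := Pi.single (0, 1) 1 - Pi.single (1, 0) 1

/-- The multiple `2√13 (√13/2 - ∑ i, X5 i ⊗ₖ Y5 i)` of the slack in `λ_max ≤ √13/2`, written as a
sum of squares of three vectors orthogonal to `singlet`. -/
noncomputable def slack : Matrix (Fin 2 × Fin 2) (Fin 2 × Fin 2) ℂ :=
  (17 : ℝ) • vecMulVec (Pi.single (0, 0) 1) (star (Pi.single (0, 0) 1)) +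
  (17 : ℝ) • vecMulVec (Pi.single (1, 1) 1) (star (Pi.single (1, 1) 1)) +
  (9 : ℝ) • vecMulVec (Pi.single (0, 1) 1 + Pi.single (1, 0) 1)
    (star (Pi.single (0, 1) 1 + Pi.single (1, 0) 1))

lemma singlet_ne_zero : singlet ≠ 0 :=
  Function.ne_iff.2 ⟨(0, 1), by simp [singlet]⟩

lemma posSemidef_slack : slack.PosSemidef :=
  (((posSemidef_vecMulVec_self_star _).smul (by norm_num)).add
    ((posSemidef_vecMulVec_self_star _).smul (by norm_num))).add
    ((posSemidef_vecMulVec_self_star _).smul (by norm_num))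

lemma slack_mulVec_singlet : slack *ᵥ singlet = 0 := by
  simp [slack, singlet, add_mulVec, smul_mulVec, vecMulVec_mulVec, dotProduct_sub]

lemma thirteen_smul_one_add_sum_smul_kronecker_self :
    (13 : ℝ) • 1 + ∑ i, diamondWeight i • (X5 i ⊗ₖ X5 i) = slack := by
  have hmul := ω_mul_conj_ω
  have hsq : 1 + ω * ω + starRingEnd ℂ ω * starRingEnd ℂ ω = 0 := by
    linear_combination (ω + starRingEnd ℂ ω - 1) * one_add_ω_add_conj_ω - 2 * hmul
  rw [← one_kronecker_one]
  ext ⟨i, j⟩ ⟨k, l⟩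
  fin_cases i <;> fin_cases j <;> fin_cases k <;> fin_cases l <;>
    simp [slack, Fin.sum_univ_four, X5, diamondWeight, vecMulVec_apply] <;> grind

lemma sqrt_thirteen_div_two_smul_one_sub_sum_kronecker :
    (√13 / 2) • 1 - ∑ i, X5 i ⊗ₖ Y5 i = (2 * √13)⁻¹ • slack := by
  have hsqrt : √13 / 2 = (2 * √13)⁻¹ * 13 := by
    field_simp
    norm_num
  have hsum : ∑ i, X5 i ⊗ₖ Y5 i =
      -((2 * √13)⁻¹ • ∑ i, diamondWeight i • (X5 i ⊗ₖ X5 i)) := by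
    simp only [Y5_eq_smul_X5, kronecker_smul, Finset.smul_sum, smul_smul, ← Finset.sum_neg_distrib,
      ← neg_smul, neg_mul]
  rw [hsum, hsqrt, sub_neg_eq_add, mul_smul, ← smul_add,
    thirteen_smul_one_add_sum_smul_kronecker_self]

lemma lambdaMaxC_sum_X5_kronecker_Y5 : lambdaMaxC (∑ i, X5 i ⊗ₖ Y5 i) = √13 / 2 := by
  apply lambdaMaxC_eq _ singlet_ne_zero
  · rw [sqrt_thirteen_div_two_smul_one_sub_sum_kronecker, smul_mulVec, slack_mulVec_singlet,
      smul_zero]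
  · rw [sqrt_thirteen_div_two_smul_one_sub_sum_kronecker]
    exact posSemidef_slack.smul (by positivity)

/-- The tuples `X5`, `Y5` lie in level 2 of the matrix cube, resp. matrix diamond, in four
variables, satisfy `λ_max(Σ_i X_i ⊗ Y_i) = √13/2`, and consequently the supremum of
`λ_max(Σ_i X_i ⊗ Y_i)` over such tuples is at least `√13/2`. -/
theorem stmt_5 :
    inCube2 X5 ∧ inDiamond2 Y5 ∧
    lambdaMaxC (∑ i, X5 i ⊗ₖ Y5 i) = Real.sqrt 13 / 2 ∧
    Real.sqrt 13 / 2 ≤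
      sSup {t : ℝ | ∃ X Y, inCube2 X ∧ inDiamond2 Y ∧
        t = lambdaMaxC (∑ i, X i ⊗ₖ Y i)} := by
  refine ⟨inCube2_X5, inDiamond2_Y5, lambdaMaxC_sum_X5_kronecker_Y5, ?_⟩
  refine le_csSup ⟨4, ?_⟩
    ⟨X5, Y5, inCube2_X5, inDiamond2_Y5, lambdaMaxC_sum_X5_kronecker_Y5.symm⟩
  rintro _ ⟨X, Y, hX, hY, rfl⟩
  exact lambdaMaxC_sum_kronecker_le hX hY
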